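/- Continuity of the homogenized energy density (Proposition 3.9 of the paper): assume Assumption H and Assumption A:2T. Then the function W₀ : ℝ^{n×d} → [0,∞) is continuous. -/

import Mathlib

open MeasureTheory Filter Metric Set
open scoped Classical
open scoped ENNReal Topology Pointwise

noncomputable section

namespace StochHom

/-- `ℝ^d` with the Euclidean norm. -/
abbrev Rd (d : ℕ) : Type := EuclideanSpace ℝ (Fin d)

/-- `ℝ^n` with the Euclidean norm. -/
abbrev Rn (n : ℕ) : Type := EuclideanSpace ℝ (Fin n)

/-- The lattice `ℤ^d`. -/
abbrev Zd (d : ℕ) : Type := Fin d → ℤ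

variable {d n : ℕ}

/-- The embedding of the lattice `ℤ^d` into `ℝ^d`. -/
def toRd (z : Zd d) : Rd d := (EuclideanSpace.equiv (Fin d) ℝ).symm fun i => (z i : ℝ)

/-- The standard basis vectors `eᵢ` of `ℤ^d`. -/
def stdb (i : Fin d) : Zd d := fun j => if j = i then 1 else 0

/-- The interaction range `R = max {4√d, max_{b ∈ ℰ₀} |b|}`. -/
def irange (d : ℕ) (E0 : Finset (Zd d)) : ℝ :=
  max (4 * Real.sqrt d) (sSup ((fun b : Zd d => ‖toRd b‖) '' (E0 : Set (Zd d))))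

variable {Ω : Type*} [MeasurableSpace Ω]

/-- The energy `E₁(ω; u, ℤ^d ∩ A)`. -/
def energy1 (τ : Zd d → Ω → Ω) (E0 : Finset (Zd d)) (V : Zd d → Ω → Rn n → ℝ)
    (ω : Ω) (u : Zd d → Rn n) (A : Set (Rd d)) : ℝ :=
  ∑' z : Zd d, if toRd z ∈ A then
      ∑ b ∈ E0, V b (τ z ω) ((‖toRd b‖)⁻¹ • (u (z + b) - u z)) else 0

/-- The scaled energy `E_ε(ω; u, A)`, where a function `u : εℤ^d → ℝ^n` is identified with a
function on `ℤ^d` via `z ↦ u(εz)`, so that `∂_b^ε u (z) = (u (z+b) - u z)/(ε |b|)`. -/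
def energyE (τ : Zd d → Ω → Ω) (E0 : Finset (Zd d)) (V : Zd d → Ω → Rn n → ℝ)
    (ε : ℝ) (ω : Ω) (u : Zd d → Rn n) (A : Set (Rd d)) : ℝ :=
  ε ^ d * ∑' z : Zd d, if ε • toRd z ∈ A then
      ∑ b ∈ E0, V b (τ z ω) ((ε * ‖toRd b‖)⁻¹ • (u (z + b) - u z)) else 0

/-- The localized minimal energy `m_F(ω; A)`. -/
def mF (τ : Zd d → Ω → Ω) (E0 : Finset (Zd d)) (V : Zd d → Ω → Rn n → ℝ)
    (ω : Ω) (F : Rd d →L[ℝ] Rn n) (A : Set (Rd d)) : ℝ :=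
  ⨅ φ : {φ : Zd d → Rn n // ∀ z : Zd d, infDist (toRd z) Aᶜ ≤ irange d E0 → φ z = 0},
    energy1 τ E0 V ω (fun z => F (toRd z) + φ.1 z) A

/-- The half-open cube `[0,k)^d ⊂ ℝ^d`. -/
def cube (d k : ℕ) : Set (Rd d) := {x | ∀ i, 0 ≤ x i ∧ x i < (k : ℝ)}

/-- The homogenized energy density `W₀(F) = inf_{k ≥ 1} k⁻ᵈ E[m_F(·, [0,k)^d)]`. -/
def W0 (P : Measure Ω) (τ : Zd d → Ω → Ω) (E0 : Finset (Zd d))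
    (V : Zd d → Ω → Rn n → ℝ) (F : Rd d →L[ℝ] Rn n) : ℝ :=
  ⨅ k : {k : ℕ // 0 < k}, (((k : ℕ) : ℝ) ^ d)⁻¹ * ∫ ω, mF τ E0 V ω F (cube d k) ∂P

/-- Half-open axis-parallel box `Π_i [aᵢ, bᵢ)`. -/
def halfBox (a b : Fin d → ℝ) : Set (Rd d) := {x | ∀ i, a i ≤ x i ∧ x i < b i}

/-- Open axis-parallel box `Π_i (aᵢ, bᵢ)`. -/
def openBox (a b : Fin d → ℝ) : Set (Rd d) := {x | ∀ i, a i < x i ∧ x i < b i}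

/-- Closed axis-parallel box `Π_i [aᵢ, bᵢ]`. -/
def closedBox (a b : Fin d → ℝ) : Set (Rd d) := {x | ∀ i, a i ≤ x i ∧ x i ≤ b i}

/-- Half-open axis-parallel box with integer corners. -/
def intBox (a b : Zd d) : Set (Rd d) := {x | ∀ i, (a i : ℝ) ≤ x i ∧ x i < (b i : ℝ)}

/-- The periodic cell minimization `W^{(k)}(ω; F)`. -/
def Wper (τ : Zd d → Ω → Ω) (E0 : Finset (Zd d)) (V : Zd d → Ω → Rn n → ℝ)
    (k : ℕ) (ω : Ω) (F : Rd d →L[ℝ] Rn n) : ℝ :=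
  ⨅ φ : {φ : Zd d → Rn n // ∀ z z' : Zd d, φ (z + k • z') = φ z},
    ((k : ℝ) ^ d)⁻¹ * energy1 τ E0 V ω (fun z => F (toRd z) + φ.1 z) (cube d k)


set_option linter.unusedSectionVars false

/-! ### Basic facts about the lattice -/

theorem toRd_apply (z : Zd d) (i : Fin d) : toRd z i = (z i : ℝ) := rfl

theorem toRd_add (z w : Zd d) : toRd (z + w) = toRd z + toRd w := by
  ext i; simp [toRd]

theorem toRd_sub (z w : Zd d) : toRd (z - w) = toRd z - toRd w := by
  ext i; simp [toRd]

/-- The lattice points of the cube `[0,k)^d`. -/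
def boxZ (d k : ℕ) : Finset (Zd d) := Fintype.piFinset fun _ => Finset.Ico (0 : ℤ) k

theorem mem_boxZ {k : ℕ} {z : Zd d} : z ∈ boxZ d k ↔ ∀ i, 0 ≤ z i ∧ z i < k := by
  simp [boxZ, Fintype.mem_piFinset]

theorem card_boxZ (k : ℕ) : (boxZ d k).card = k ^ d := by
  simp [boxZ, Fintype.card_piFinset]

theorem toRd_mem_cube {k : ℕ} {z : Zd d} : toRd z ∈ cube d k ↔ z ∈ boxZ d k := by
  rw [mem_boxZ]
  simp only [cube, Set.mem_ofPred_eq, toRd_apply]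
  refine forall_congr' fun i => ?_
  norm_cast

theorem energy1_cube (τ : Zd d → Ω → Ω) (E0 : Finset (Zd d)) (V : Zd d → Ω → Rn n → ℝ)
    (ω : Ω) (u : Zd d → Rn n) (k : ℕ) :
    energy1 τ E0 V ω u (cube d k) =
      ∑ z ∈ boxZ d k, ∑ b ∈ E0, V b (τ z ω) ((‖toRd b‖)⁻¹ • (u (z + b) - u z)) := by
  unfold energy1
  rw [tsum_eq_sum (s := boxZ d k)]
  · refine Finset.sum_congr rfl fun z hz => ?_
    rw [if_pos (toRd_mem_cube.2 hz)]
  · intro z hz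
    rw [if_neg (fun h => hz (toRd_mem_cube.1 h))]

theorem norm_le_irange {E0 : Finset (Zd d)} {b : Zd d} (hb : b ∈ E0) :
    ‖toRd b‖ ≤ irange d E0 := by
  refine le_trans ?_ (le_max_right _ _)
  exact le_csSup (E0.finite_toSet.image _).bddAbove ⟨b, hb, rfl⟩

theorem irange_nonneg (E0 : Finset (Zd d)) : 0 ≤ irange d E0 :=
  le_trans (by positivity) (le_max_left _ _)

theorem norm_toRd_le {k : ℕ} {z : Zd d} (hz : z ∈ boxZ d k) : ‖toRd z‖ ≤ d * k := by
  rw [EuclideanSpace.norm_eq, Real.sqrt_le_left (by positivity)]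
  have h1 : ∀ i ∈ (Finset.univ : Finset (Fin d)), ‖toRd z i‖ ^ 2 ≤ (k : ℝ) ^ 2 := by
    intro i _
    rw [toRd_apply]
    have h := mem_boxZ.1 hz i
    have h0 : (0 : ℝ) ≤ z i := by exact_mod_cast h.1
    have h1 : (z i : ℝ) ≤ k := by exact_mod_cast h.2.le
    rw [Real.norm_of_nonneg h0]
    gcongr
  refine (Finset.sum_le_sum h1).trans ?_
  simp only [Finset.sum_const, Finset.card_univ, Fintype.card_fin, nsmul_eq_mul]
  rcases Nat.eq_zero_or_pos d with rfl | hd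
  · simp
  · have : (1 : ℝ) ≤ d := by exact_mod_cast hd
    nlinarith [mul_nonneg (mul_nonneg (sub_nonneg.2 this) (Nat.cast_nonneg d)) (sq_nonneg (k : ℝ))]

theorem cube_compl_nonempty (hd : 0 < d) (k : ℕ) : ((cube d k)ᶜ).Nonempty := by
  refine ⟨toRd (fun _ => -1), fun h => ?_⟩
  have := (mem_boxZ.1 (toRd_mem_cube.1 h) ⟨0, hd⟩).1
  norm_num at this

/-- A competitor is nonzero only at points which are well inside the cube. -/
theorem mem_of_ne_zero {E0 : Finset (Zd d)} {k : ℕ} {φ : Zd d → Rn n}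
    (hφ : ∀ z : Zd d, infDist (toRd z) (cube d k)ᶜ ≤ irange d E0 → φ z = 0)
    {z w : Zd d} (hz : φ z ≠ 0) (hw : ‖toRd w‖ ≤ irange d E0) : z - w ∈ boxZ d k := by
  by_contra h
  refine hz (hφ z ?_)
  have h1 : toRd (z - w) ∈ (cube d k)ᶜ := fun h' => h (toRd_mem_cube.1 h')
  refine (infDist_le_dist_of_mem h1).trans ?_
  rw [toRd_sub, dist_eq_norm]
  simpa using hw

theorem mem_of_ne_zero' {E0 : Finset (Zd d)} {k : ℕ} {φ : Zd d → Rn n}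
    (hφ : ∀ z : Zd d, infDist (toRd z) (cube d k)ᶜ ≤ irange d E0 → φ z = 0)
    {z : Zd d} (hz : φ z ≠ 0) : z ∈ boxZ d k := by
  have := mem_of_ne_zero hφ hz (w := 0) (by
    have : toRd (0 : Zd d) = 0 := by ext i; simp [toRd]
    rw [this, norm_zero]; exact irange_nonneg E0)
  simpa using this

/-- Points at distance `s` from the faces. -/
theorem le_infDist_cube (hd : 0 < d) {K s : ℕ} {z : Zd d}
    (hz : ∀ i, (s : ℤ) ≤ z i ∧ z i + s ≤ K) : (s : ℝ) ≤ infDist (toRd z) (cube d K)ᶜ := by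
  rw [le_infDist (cube_compl_nonempty hd K)]
  intro y hy
  have : ∃ i, y i < 0 ∨ (K : ℝ) ≤ y i := by
    by_contra h
    push Not at h
    exact hy fun i => ⟨(h i).1, (h i).2⟩
  obtain ⟨i, hi⟩ := this
  have h1 : |(z i : ℝ) - y i| ≤ dist (toRd z) y := by
    rw [dist_eq_norm]
    have := PiLp.norm_apply_le (toRd z - y) i
    simpa [toRd_apply, Real.norm_eq_abs] using this
  refine le_trans ?_ h1
  have h2 : (s : ℝ) ≤ z i := by exact_mod_cast (hz i).1
  have h3 : (z i : ℝ) + s ≤ K := by exact_mod_cast (hz i).2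
  rcases hi with hi | hi
  · exact le_trans (by linarith) (le_abs_self _)
  · exact le_trans (by linarith) (neg_le_abs _)

/-! ### Nonnegativity and measurability -/

theorem energy1_nonneg {τ : Zd d → Ω → Ω} {E0 : Finset (Zd d)} {V : Zd d → Ω → Rn n → ℝ}
    (hVnn : ∀ b ∈ E0, ∀ (ω : Ω) (r : Rn n), 0 ≤ V b ω r)
    (ω : Ω) (u : Zd d → Rn n) (k : ℕ) : 0 ≤ energy1 τ E0 V ω u (cube d k) := by
  rw [energy1_cube]
  exact Finset.sum_nonneg fun z _ => Finset.sum_nonneg fun b hb => hVnn b hb _ _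

theorem mF_nonneg {τ : Zd d → Ω → Ω} {E0 : Finset (Zd d)} {V : Zd d → Ω → Rn n → ℝ}
    (hVnn : ∀ b ∈ E0, ∀ (ω : Ω) (r : Rn n), 0 ≤ V b ω r)
    (ω : Ω) (F : Rd d →L[ℝ] Rn n) (k : ℕ) : 0 ≤ mF τ E0 V ω F (cube d k) :=
  Real.iInf_nonneg fun _ => energy1_nonneg hVnn _ _ _

theorem mF_le {τ : Zd d → Ω → Ω} {E0 : Finset (Zd d)} {V : Zd d → Ω → Rn n → ℝ}
    (hVnn : ∀ b ∈ E0, ∀ (ω : Ω) (r : Rn n), 0 ≤ V b ω r)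
    (ω : Ω) (F : Rd d →L[ℝ] Rn n) (k : ℕ) (φ : Zd d → Rn n)
    (hφ : ∀ z : Zd d, infDist (toRd z) (cube d k)ᶜ ≤ irange d E0 → φ z = 0) :
    mF τ E0 V ω F (cube d k) ≤ energy1 τ E0 V ω (fun z => F (toRd z) + φ z) (cube d k) :=
  ciInf_le (f := fun φ : {φ : Zd d → Rn n //
      ∀ z : Zd d, infDist (toRd z) (cube d k)ᶜ ≤ irange d E0 → φ z = 0} =>
      energy1 τ E0 V ω (fun z => F (toRd z) + φ.1 z) (cube d k))
    ⟨0, by rintro _ ⟨φ, rfl⟩; exact energy1_nonneg hVnn _ _ _⟩ ⟨φ, hφ⟩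

/-- The infimum of a continuous nonnegative function over a dense range. -/
theorem iInf_denseRange {X : Type*} [TopologicalSpace X] [Nonempty X] {f : X → ℝ}
    (hf : Continuous f) (h0 : ∀ x, 0 ≤ f x) {s : ℕ → X} (hs : DenseRange s) :
    ⨅ x, f x = ⨅ m, f (s m) := by
  have hb1 : BddBelow (Set.range f) := ⟨0, by rintro _ ⟨x, rfl⟩; exact h0 x⟩
  have hb2 : BddBelow (Set.range fun m => f (s m)) := ⟨0, by rintro _ ⟨x, rfl⟩; exact h0 _⟩
  apply le_antisymm
  · exact le_ciInf fun m => ciInf_le hb1 (s m)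
  · refine le_ciInf fun x => ?_
    have hcl : IsClosed {x | ⨅ m, f (s m) ≤ f x} := isClosed_le continuous_const hf
    have hsub : Set.range s ⊆ {x | ⨅ m, f (s m) ≤ f x} := by
      rintro _ ⟨m, rfl⟩; exact ciInf_le hb2 m
    exact closure_minimal hsub hcl (hs x)

/-- The space of competitors. -/
abbrev Adm (n : ℕ) (E0 : Finset (Zd d)) (k : ℕ) : Type :=
  {φ : Zd d → Rn n // ∀ z : Zd d, infDist (toRd z) (cube d k)ᶜ ≤ irange d E0 → φ z = 0}

theorem measurable_mF {τ : Zd d → Ω → Ω} {E0 : Finset (Zd d)} {V : Zd d → Ω → Rn n → ℝ}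
    (hτ : ∀ z, Measurable (τ z))
    (hVmeas : ∀ b ∈ E0, Measurable fun q : Ω × Rn n => V b q.1 q.2)
    (hVcont : ∀ b ∈ E0, ∀ ω : Ω, Continuous (V b ω))
    (hVnn : ∀ b ∈ E0, ∀ (ω : Ω) (r : Rn n), 0 ≤ V b ω r)
    (F : Rd d →L[ℝ] Rn n) (k : ℕ) : Measurable fun ω => mF τ E0 V ω F (cube d k) := by
  have hne : Nonempty (Adm n E0 k) := ⟨⟨fun _ => 0, fun _ _ => rfl⟩⟩
  have hsc : SecondCountableTopology (Zd d → Rn n) := inferInstance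
  have hsc2 : SecondCountableTopology (Adm n E0 k) :=
    TopologicalSpace.Subtype.secondCountableTopology _
  have hsep : TopologicalSpace.SeparableSpace (Adm n E0 k) :=
    TopologicalSpace.SecondCountableTopology.to_separableSpace
  obtain ⟨seq, hseq⟩ := TopologicalSpace.exists_dense_seq (Adm n E0 k)
  have key : ∀ ω, mF τ E0 V ω F (cube d k) = ⨅ m : ℕ, energy1 τ E0 V ω
      (fun z => F (toRd z) + (seq m).1 z) (cube d k) := by
    intro ω
    refine iInf_denseRange (X := Adm n E0 k)
      (f := fun φ => energy1 τ E0 V ω (fun z => F (toRd z) + φ.1 z) (cube d k)) ?_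
      (fun _ => energy1_nonneg hVnn _ _ _) hseq
    simp only [energy1_cube]
    refine continuous_finsetSum _ fun z _ => continuous_finsetSum _ fun b hb => ?_
    refine (hVcont b hb _).comp ?_
    have hev : ∀ z : Zd d, Continuous fun φ : Adm n E0 k => φ.1 z :=
      fun z => (continuous_apply z).comp continuous_subtype_val
    have hdif : Continuous fun φ : Adm n E0 k =>
        (F (toRd (z + b)) + φ.1 (z + b)) - (F (toRd z) + φ.1 z) :=
      (continuous_const.add (hev _)).sub (continuous_const.add (hev _))
    exact hdif.const_smul (‖toRd b‖)⁻¹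
  simp only [key]
  refine Measurable.iInf fun m => ?_
  simp only [energy1_cube]
  refine Finset.measurable_sum _ fun z _ => Finset.measurable_sum _ fun b hb => ?_
  exact (hVmeas b hb).comp ((hτ z).prodMk measurable_const)

/-! ### The construction -/

/-- The corner of the cell with index `j`. -/
def corner (s k : ℕ) (j : Zd d) : Zd d := fun i => (s : ℤ) + k * j i

/-- The lattice points covered by the inner cells. -/
def inner (d s k N : ℕ) : Finset (Zd d) :=
  (boxZ d N ×ˢ boxZ d k).image fun q => corner s k q.1 + q.2

theorem cell_unique {s k : ℕ} {j j' y y' : Zd d} (hy : y ∈ boxZ d k) (hy' : y' ∈ boxZ d k)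
    (h : corner s k j + y = corner s k j' + y') : j = j' := by
  funext i
  have h1 := congrFun h i
  have h2 := mem_boxZ.1 hy i
  have h3 := mem_boxZ.1 hy' i
  simp only [corner, Pi.add_apply] at h1
  rcases lt_trichotomy (j i) (j' i) with hlt | heq | hgt
  · nlinarith
  · exact heq
  · nlinarith

theorem cell_injOn (s k N : ℕ) : Set.InjOn (fun q : Zd d × Zd d => corner s k q.1 + q.2)
    (boxZ d N ×ˢ boxZ d k : Finset (Zd d × Zd d)) := by
  rintro ⟨j, y⟩ h ⟨j', y'⟩ h' heq
  simp only [Finset.coe_product, Set.mem_prod, Finset.mem_coe] at h h'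
  have hj := cell_unique h.2 h'.2 heq
  subst hj
  simp only [add_right_inj] at heq
  rw [heq]

theorem card_inner (s k N : ℕ) : (inner d s k N).card = (N * k) ^ d := by
  rw [inner, Finset.card_image_of_injOn (cell_injOn s k N), Finset.card_product, card_boxZ,
    card_boxZ, mul_pow]

theorem corner_add_bounds {s k N K : ℕ} (hK : K = N * k + 2 * s) {j y : Zd d}
    (hj : j ∈ boxZ d N) (hy : y ∈ boxZ d k) (i : Fin d) :
    (s : ℤ) ≤ (corner s k j + y) i ∧ (corner s k j + y) i + s + 1 ≤ K := by
  have h1 := mem_boxZ.1 hj i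
  have h2 := mem_boxZ.1 hy i
  subst hK
  simp only [corner, Pi.add_apply]
  push_cast
  have h3 : (0 : ℤ) ≤ k := by positivity
  constructor
  · nlinarith
  · nlinarith

theorem inner_subset {s k N K : ℕ} (hK : K = N * k + 2 * s) : inner d s k N ⊆ boxZ d K := by
  intro z hz
  simp only [inner, Finset.mem_image, Finset.mem_product] at hz
  obtain ⟨q, ⟨hj, hy⟩, rfl⟩ := hz
  refine mem_boxZ.2 fun i => ?_
  have := corner_add_bounds hK hj hy i
  omega

/-- The cut-off function. -/
def cutoff (E0 : Finset (Zd d)) (K s : ℕ) (z : Zd d) : ℝ :=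
  max 0 (min 1 ((infDist (toRd z) (cube d K)ᶜ - irange d E0) / (s / 2)))

theorem cutoff_nonneg (E0 : Finset (Zd d)) (K s : ℕ) (z : Zd d) : 0 ≤ cutoff E0 K s z :=
  le_max_left _ _

theorem cutoff_le_one (E0 : Finset (Zd d)) (K s : ℕ) (z : Zd d) : cutoff E0 K s z ≤ 1 :=
  max_le zero_le_one (min_le_left _ _)

theorem cutoff_eq_zero {E0 : Finset (Zd d)} {K s : ℕ} {z : Zd d}
    (h : infDist (toRd z) (cube d K)ᶜ ≤ irange d E0) : cutoff E0 K s z = 0 := by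
  refine max_eq_left ((min_le_right _ _).trans ?_)
  exact div_nonpos_of_nonpos_of_nonneg (by linarith) (by positivity)

theorem cutoff_eq_one {E0 : Finset (Zd d)} {K s : ℕ} (hs : 0 < s) {z : Zd d}
    (h : irange d E0 + s / 2 ≤ infDist (toRd z) (cube d K)ᶜ) : cutoff E0 K s z = 1 := by
  have hs' : (0 : ℝ) < s := by exact_mod_cast hs
  have : (1 : ℝ) ≤ (infDist (toRd z) (cube d K)ᶜ - irange d E0) / (s / 2) := by
    rw [le_div_iff₀ (by positivity)]; linarith
  rw [cutoff, min_eq_left this]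
  exact max_eq_right zero_le_one

theorem cutoff_lip (E0 : Finset (Zd d)) (K s : ℕ) (z b : Zd d) :
    |cutoff E0 K s (z + b) - cutoff E0 K s z| ≤ ‖toRd b‖ / (s / 2) := by
  unfold cutoff
  refine (abs_max_sub_max_le_max _ _ _ _).trans ?_
  rw [sub_self, abs_zero]
  refine max_le (by positivity) ((abs_min_sub_min_le_max _ _ _ _).trans ?_)
  rw [sub_self, abs_zero]
  refine max_le (by positivity) ?_
  rw [← sub_div, abs_div, abs_of_nonneg (by positivity : (0 : ℝ) ≤ s / 2)]
  gcongr
  rw [sub_sub_sub_cancel_right]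
  have h1 := infDist_le_infDist_add_dist (s := (cube d K)ᶜ) (x := toRd (z + b)) (y := toRd z)
  have h2 := infDist_le_infDist_add_dist (s := (cube d K)ᶜ) (x := toRd z) (y := toRd (z + b))
  rw [dist_comm] at h2
  have h3 : dist (toRd (z + b)) (toRd z) = ‖toRd b‖ := by rw [dist_eq_norm, toRd_add]; simp
  rw [h3] at h1 h2
  rw [abs_le]; constructor <;> linarith

/-- Pointwise subadditivity with change of the boundary data. -/
theorem mF_le_tiling (hd : 0 < d) {τ : Zd d → Ω → Ω}
    (hτadd : ∀ x y : Zd d, τ (x + y) = τ x ∘ τ y)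
    {E0 : Finset (Zd d)} {p c₁ : ℝ} (hp : 1 < p) (hc₁ : 0 < c₁) {V : Zd d → Ω → Rn n → ℝ}
    (hVnn : ∀ b ∈ E0, ∀ (ω : Ω) (r : Rn n), 0 ≤ V b ω r)
    {lam : Zd d → Ω → ℝ} (hlamnn : ∀ b ∈ E0, ∀ ω : Ω, 0 ≤ lam b ω)
    (hgrowth : ∀ b ∈ E0, ∀ (ω : Ω) (r : Rn n), V b ω r ≤ c₁ * (1 + lam b ω * (‖r‖ ^ p + 1)))
    {k N s K : ℕ} (hK : K = N * k + 2 * s) (hs0 : 0 < s) (hs : 4 * irange d E0 ≤ s)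
    (F F' : Rd d →L[ℝ] Rn n) {M : ℝ}
    (hM : ‖F‖ + ‖F' - F‖ * (1 + d * K / (s / 2)) ≤ M) (ω : Ω) :
    mF τ E0 V ω F (cube d K) ≤
      ∑ j ∈ boxZ d N, mF τ E0 V (τ (corner s k j) ω) F' (cube d k) +
      ∑ z ∈ boxZ d K \ inner d s k N,
        ∑ b ∈ E0, c₁ * (1 + lam b (τ z ω) * (M ^ p + 1)) := by
  have hs0' : (0 : ℝ) < s := by exact_mod_cast hs0
  have hR := irange_nonneg E0
  refine le_of_forall_pos_le_add fun ε hε => ?_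
  -- near minimizers
  have hex : ∀ j : Zd d, ∃ φ : Adm n E0 k,
      energy1 τ E0 V (τ (corner s k j) ω) (fun z => F' (toRd z) + φ.1 z) (cube d k) <
        mF τ E0 V (τ (corner s k j) ω) F' (cube d k) + ε / (N ^ d + 1 : ℝ) := by
    intro j
    have hne : Nonempty (Adm n E0 k) := ⟨⟨fun _ => 0, fun _ _ => rfl⟩⟩
    exact exists_lt_of_ciInf_lt (lt_add_of_pos_right _ (by positivity))
  choose φ hφ using hex
  set G := F' - F with hG
  set η := cutoff E0 K s with hη
  set Φ : Zd d → Rn n := fun z => ∑ j ∈ boxZ d N, (φ j).1 (z - corner s k j) with hΦ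
  -- the glued part in a cell
  have hΦin : ∀ j ∈ boxZ d N, ∀ y ∈ boxZ d k, ∀ w : Zd d, ‖toRd w‖ ≤ irange d E0 →
      Φ (corner s k j + y + w) = (φ j).1 (y + w) := by
    intro j hj y hy w hw
    simp only [hΦ]
    rw [Finset.sum_eq_single_of_mem j hj]
    · rw [show corner s k j + y + w - corner s k j = y + w by abel]
    · intro j' _ hne
      by_contra h0
      have := mem_of_ne_zero (φ j').2 h0 hw
      refine hne (cell_unique (s := s) this hy ?_)
      abel
  have hΦout : ∀ z, z ∉ inner d s k N → ∀ w : Zd d, ‖toRd w‖ ≤ irange d E0 → Φ (z + w) = 0 := by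
    intro z hz w hw
    refine Finset.sum_eq_zero fun j hj => ?_
    by_contra h0
    have := mem_of_ne_zero (φ j).2 h0 hw
    refine hz ?_
    simp only [inner, Finset.mem_image, Finset.mem_product]
    exact ⟨(j, _), ⟨hj, this⟩, by simp only; abel⟩
  have h00 : ‖toRd (0 : Zd d)‖ ≤ irange d E0 := by
    have : toRd (0 : Zd d) = 0 := by ext i; simp [toRd]
    rw [this, norm_zero]; exact hR
  have hdist : ∀ z ∈ inner d s k N, (s : ℝ) ≤ infDist (toRd z) (cube d K)ᶜ := by
    intro z hz
    simp only [inner, Finset.mem_image, Finset.mem_product] at hz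
    obtain ⟨q, ⟨hj, hy⟩, rfl⟩ := hz
    refine le_infDist_cube hd fun i => ?_
    have := corner_add_bounds hK hj hy i
    omega
  have hη1 : ∀ z ∈ inner d s k N, ∀ w : Zd d, ‖toRd w‖ ≤ irange d E0 → η (z + w) = 1 := by
    intro z hz w hw
    refine cutoff_eq_one hs0 ?_
    have h1 := hdist z hz
    have h2 := infDist_le_infDist_add_dist (s := (cube d K)ᶜ) (x := toRd z) (y := toRd (z + w))
    have h3 : dist (toRd z) (toRd (z + w)) = ‖toRd w‖ := by
      rw [dist_comm, dist_eq_norm, toRd_add]; simp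
    rw [h3] at h2
    linarith
  set ψ : Zd d → Rn n := fun z => η z • G (toRd z) + Φ z with hψ
  have hadm : ∀ z : Zd d, infDist (toRd z) (cube d K)ᶜ ≤ irange d E0 → ψ z = 0 := by
    intro z hz
    have hz' : z ∉ inner d s k N := fun h => by
      have := hdist z h
      linarith
    have h1 := hΦout z hz' 0 h00
    rw [add_zero] at h1
    have h2 : η z = 0 := cutoff_eq_zero hz
    simp only [hψ, h1, h2, zero_smul, add_zero]
  refine (mF_le hVnn ω F K ψ hadm).trans ?_
  rw [energy1_cube, ← Finset.sum_sdiff (inner_subset (d := d) hK), add_comm, add_right_comm]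
  refine add_le_add ?_ ?_
  · -- inner cells
    rw [inner, Finset.sum_image (cell_injOn s k N), Finset.sum_product]
    have hsum : ∑ j ∈ boxZ d N, mF τ E0 V (τ (corner s k j) ω) F' (cube d k) + ε ≥
        ∑ j ∈ boxZ d N, (mF τ E0 V (τ (corner s k j) ω) F' (cube d k) + ε / (N ^ d + 1 : ℝ)) := by
      rw [Finset.sum_add_distrib, Finset.sum_const, card_boxZ, nsmul_eq_mul]
      have : ((N ^ d : ℕ) : ℝ) * (ε / (N ^ d + 1 : ℝ)) ≤ ε := by
        push_cast
        rw [mul_div_assoc', div_le_iff₀ (by positivity)]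
        nlinarith
      linarith
    refine le_trans (Finset.sum_le_sum fun j hj => ?_) hsum
    refine le_trans (le_of_eq ?_) (hφ j).le
    rw [energy1_cube]
    refine Finset.sum_congr rfl fun y hy => Finset.sum_congr rfl fun b hb => ?_
    have hτ' : τ (corner s k j + y) ω = τ y (τ (corner s k j) ω) := by
      rw [add_comm, hτadd]; rfl
    have hmem : corner s k j + y ∈ inner d s k N := by
      simp only [inner, Finset.mem_image, Finset.mem_product]
      exact ⟨(j, y), ⟨hj, hy⟩, rfl⟩
    have hb' := norm_le_irange hb
    have e1 := hη1 _ hmem b hb'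
    have e2 := hη1 _ hmem 0 h00
    have e3 := hΦin j hj y hy b hb'
    have e4 := hΦin j hj y hy 0 h00
    simp only [add_zero] at e2 e4
    simp only [hτ', hψ, e1, e2, e3, e4, one_smul, hG]
    congr 2
    simp only [toRd_add, map_add, _root_.sub_apply]
    abel
  · -- the shell
    refine Finset.sum_le_sum fun z hz => Finset.sum_le_sum fun b hb => ?_
    rw [Finset.mem_sdiff] at hz
    have hb' := norm_le_irange hb
    refine (hgrowth b hb _ _).trans ?_
    have e3 := hΦout z hz.2 b hb'
    have e4 := hΦout z hz.2 0 h00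
    rw [add_zero] at e4
    have hdiff : (F (toRd (z + b)) + ψ (z + b)) - (F (toRd z) + ψ z) =
        F (toRd b) + η (z + b) • G (toRd b) + (η (z + b) - η z) • G (toRd z) := by
      simp only [hψ, e3, e4, toRd_add, map_add, smul_add, sub_smul]
      abel
    have hnorm : ‖(‖toRd b‖)⁻¹ • ((F (toRd (z + b)) + ψ (z + b)) - (F (toRd z) + ψ z))‖ ≤ M := by
      rw [hdiff, norm_smul, norm_inv, norm_norm]
      have n1 : ‖F (toRd b)‖ ≤ ‖F‖ * ‖toRd b‖ := F.le_opNorm _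
      have n2 : ‖η (z + b) • G (toRd b)‖ ≤ ‖G‖ * ‖toRd b‖ := by
        rw [norm_smul, Real.norm_of_nonneg (cutoff_nonneg _ _ _ _)]
        calc η (z + b) * ‖G (toRd b)‖ ≤ 1 * ‖G (toRd b)‖ := by
              gcongr; exact cutoff_le_one _ _ _ _
          _ ≤ _ := by rw [one_mul]; exact G.le_opNorm _
      have n3 : ‖(η (z + b) - η z) • G (toRd z)‖ ≤
          ‖toRd b‖ / (s / 2) * (‖G‖ * (d * K)) := by
        rw [norm_smul, Real.norm_eq_abs]
        refine mul_le_mul (cutoff_lip _ _ _ _ _) ?_ (norm_nonneg _) (by positivity)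
        refine (G.le_opNorm _).trans ?_
        gcongr
        exact norm_toRd_le hz.1
      have n4 : ‖F (toRd b) + η (z + b) • G (toRd b) + (η (z + b) - η z) • G (toRd z)‖ ≤
          ‖toRd b‖ * M := by
        refine (norm_add₃_le).trans ?_
        have : ‖toRd b‖ * (‖F‖ + ‖G‖ * (1 + d * K / (s / 2))) ≤ ‖toRd b‖ * M := by gcongr
        refine le_trans ?_ this
        refine (add_le_add (add_le_add n1 n2) n3).trans (le_of_eq ?_)
        ring
      have hM0 : 0 ≤ M := le_trans (by positivity) hM
      calc (‖toRd b‖)⁻¹ * _ ≤ (‖toRd b‖)⁻¹ * (‖toRd b‖ * M) := by gcongr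
        _ = ((‖toRd b‖)⁻¹ * ‖toRd b‖) * M := by ring
        _ ≤ 1 * M := by gcongr; exact inv_mul_le_one
        _ = M := one_mul M
    have hl := hlamnn b hb (τ z ω)
    have : (0 : ℝ) ≤ p := by linarith
    gcongr

/-! ### Integrability and the comparison estimate -/

theorem integrable_lam {P : Measure Ω} [IsProbabilityMeasure P] {l : Ω → ℝ} (hl : Measurable l)
    (hl0 : ∀ ω, 0 ≤ l ω) {α : ℝ} (hα : 1 ≤ α)
    (h : ∫⁻ ω, ENNReal.ofReal (l ω ^ α) ∂P < ⊤) : Integrable l P := by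
  have h1 : Integrable (fun ω => l ω ^ α) P := by
    refine ⟨(hl.pow_const α).aestronglyMeasurable, ?_⟩
    rw [hasFiniteIntegral_iff_ofReal (Eventually.of_forall fun ω => Real.rpow_nonneg (hl0 ω) α)]
    exact h
  refine ((integrable_const (1 : ℝ)).add h1).mono' hl.aestronglyMeasurable
    (Eventually.of_forall fun ω => ?_)
  rw [Real.norm_of_nonneg (hl0 ω)]
  simp only [Pi.add_apply]
  have h0 := Real.rpow_nonneg (hl0 ω) α
  rcases le_total (l ω) 1 with h2 | h2
  · linarith
  · have := Real.rpow_le_rpow_of_exponent_le h2 hα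
    rw [Real.rpow_one] at this
    linarith

/-- The random bound for the energy of a deformation with gradient bounded by `M`. -/
def bd (E0 : Finset (Zd d)) (lam : Zd d → Ω → ℝ) (c₁ p M : ℝ) (ω : Ω) : ℝ :=
  ∑ b ∈ E0, c₁ * (1 + lam b ω * (M ^ p + 1))

theorem integrable_bd {P : Measure Ω} [IsProbabilityMeasure P] {E0 : Finset (Zd d)}
    {lam : Zd d → Ω → ℝ} (hint : ∀ b ∈ E0, Integrable (lam b) P) (c₁ p M : ℝ) :
    Integrable (bd E0 lam c₁ p M) P := by
  unfold bd
  refine integrable_finsetSum _ fun b hb => ?_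
  exact ((integrable_const (1 : ℝ)).add ((hint b hb).mul_const _)).const_mul _

theorem integrable_mF {P : Measure Ω} [IsProbabilityMeasure P] {τ : Zd d → Ω → Ω}
    (hτmp : ∀ z : Zd d, MeasurePreserving (τ z) P P)
    {E0 : Finset (Zd d)} {p c₁ : ℝ} (hp : 1 < p) (hc₁ : 0 < c₁) {V : Zd d → Ω → Rn n → ℝ}
    (hVmeas : ∀ b ∈ E0, Measurable fun q : Ω × Rn n => V b q.1 q.2)
    (hVcont : ∀ b ∈ E0, ∀ ω : Ω, Continuous (V b ω))
    (hVnn : ∀ b ∈ E0, ∀ (ω : Ω) (r : Rn n), 0 ≤ V b ω r)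
    {lam : Zd d → Ω → ℝ} (hlamnn : ∀ b ∈ E0, ∀ ω : Ω, 0 ≤ lam b ω)
    (hint : ∀ b ∈ E0, Integrable (lam b) P)
    (hgrowth : ∀ b ∈ E0, ∀ (ω : Ω) (r : Rn n), V b ω r ≤ c₁ * (1 + lam b ω * (‖r‖ ^ p + 1)))
    (F : Rd d →L[ℝ] Rn n) (k : ℕ) : Integrable (fun ω => mF τ E0 V ω F (cube d k)) P := by
  have hg : Integrable (fun ω => ∑ z ∈ boxZ d k, bd E0 lam c₁ p ‖F‖ (τ z ω)) P :=
    integrable_finsetSum _ fun z _ => (hτmp z).integrable_comp_of_integrable (integrable_bd hint _ _ _)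
  refine hg.mono' (measurable_mF (fun z => (hτmp z).measurable) hVmeas hVcont hVnn F
    k).aestronglyMeasurable (Eventually.of_forall fun ω => ?_)
  rw [Real.norm_of_nonneg (mF_nonneg hVnn _ _ _)]
  refine (mF_le hVnn ω F k (fun _ => 0) fun _ _ => rfl).trans ?_
  rw [energy1_cube]
  refine Finset.sum_le_sum fun z hz => Finset.sum_le_sum fun b hb => ?_
  refine (hgrowth b hb _ _).trans ?_
  have hnorm : ‖(‖toRd b‖)⁻¹ • ((F (toRd (z + b)) + 0) - (F (toRd z) + 0))‖ ≤ ‖F‖ := by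
    rw [add_zero, add_zero, toRd_add, map_add, add_sub_cancel_left, norm_smul, norm_inv, norm_norm]
    calc (‖toRd b‖)⁻¹ * _ ≤ (‖toRd b‖)⁻¹ * (‖F‖ * ‖toRd b‖) := by gcongr; exact F.le_opNorm _
      _ = ((‖toRd b‖)⁻¹ * ‖toRd b‖) * ‖F‖ := by ring
      _ ≤ 1 * ‖F‖ := by gcongr; exact inv_mul_le_one
      _ = ‖F‖ := one_mul _
  have hl := hlamnn b hb (τ z ω)
  have : (0 : ℝ) ≤ p := by linarith
  gcongr

theorem integral_comp_mp {P : Measure Ω} {T : Ω → Ω} (hT : MeasurePreserving T P P) {g : Ω → ℝ}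
    (hg : Integrable g P) : ∫ ω, g (T ω) ∂P = ∫ ω, g ω ∂P := by
  have h := integral_map (μ := P) (φ := T) hT.measurable.aemeasurable (f := g)
    (by rw [hT.map_eq]; exact hg.aestronglyMeasurable)
  rw [hT.map_eq] at h
  exact h.symm

theorem W0_compare (hd : 0 < d) {P : Measure Ω} [IsProbabilityMeasure P] {τ : Zd d → Ω → Ω}
    (hτadd : ∀ x y : Zd d, τ (x + y) = τ x ∘ τ y)
    (hτmp : ∀ z : Zd d, MeasurePreserving (τ z) P P)
    {E0 : Finset (Zd d)} {p c₁ : ℝ} (hp : 1 < p) (hc₁ : 0 < c₁) {V : Zd d → Ω → Rn n → ℝ}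
    (hVmeas : ∀ b ∈ E0, Measurable fun q : Ω × Rn n => V b q.1 q.2)
    (hVcont : ∀ b ∈ E0, ∀ ω : Ω, Continuous (V b ω))
    (hVnn : ∀ b ∈ E0, ∀ (ω : Ω) (r : Rn n), 0 ≤ V b ω r)
    {lam : Zd d → Ω → ℝ} (hlamnn : ∀ b ∈ E0, ∀ ω : Ω, 0 ≤ lam b ω)
    (hint : ∀ b ∈ E0, Integrable (lam b) P)
    (hgrowth : ∀ b ∈ E0, ∀ (ω : Ω) (r : Rn n), V b ω r ≤ c₁ * (1 + lam b ω * (‖r‖ ^ p + 1)))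
    {M ε : ℝ} (hM : 0 ≤ M) (hε : 0 < ε) :
    ∃ ρ > 0, ∀ F F' : Rd d →L[ℝ] Rn n, ‖F‖ ≤ M → ‖F' - F‖ ≤ ρ →
      W0 P τ E0 V F ≤ W0 P τ E0 V F' + ε := by
  set C := ∫ ω, bd E0 lam c₁ p (M + 1) ω ∂P with hC
  have hC0 : 0 ≤ C := by
    refine integral_nonneg fun ω => Finset.sum_nonneg fun b hb => ?_
    have hl := hlamnn b hb ω
    positivity
  obtain ⟨t, ht⟩ := exists_nat_ge (2 * d * (C + 1) / ε)
  have hden : (0 : ℝ) < 1 + 2 * d * (t + 2) := by positivity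
  refine ⟨1 / (1 + 2 * d * (t + 2)), by positivity, fun F F' hF hFF => ?_⟩
  rw [← sub_le_iff_le_add]
  have hne : Nonempty {k : ℕ // 0 < k} := ⟨⟨1, one_pos⟩⟩
  refine le_ciInf fun ⟨k, hk⟩ => ?_
  rw [sub_le_iff_le_add]
  simp only
  have hk' : (0 : ℝ) < k := by exact_mod_cast hk
  obtain ⟨m', hm'⟩ := exists_nat_ge (4 * irange d E0)
  set m := m' + 1 with hm
  have hmpos : 0 < m := Nat.succ_pos _
  have hm0 : (0 : ℝ) < m := by exact_mod_cast hmpos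
  set s := m * k with hs
  set N := t * m with hN
  set K := N * k + 2 * s with hK
  have hs0 : 0 < s := Nat.mul_pos hmpos hk
  have hs0' : (0 : ℝ) < s := by exact_mod_cast hs0
  have hK0 : 0 < K := by omega
  have hK0' : (0 : ℝ) < K := by exact_mod_cast hK0
  have hsR : 4 * irange d E0 ≤ s := by
    have h1 : m' ≤ s := le_trans (Nat.le_succ m') (Nat.le_mul_of_pos_right m hk)
    have h2 : (m' : ℝ) ≤ s := by exact_mod_cast h1
    linarith
  have hKs : (K : ℝ) = (t + 2) * s := by
    rw [hK, hN, hs]; push_cast; ring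
  have hNk : ((N * k : ℕ) : ℝ) = t * s := by
    rw [hN, hs]; push_cast; ring
  have hMM : ‖F‖ + ‖F' - F‖ * (1 + d * K / (s / 2)) ≤ M + 1 := by
    have h1 : (1 + d * K / (s / 2) : ℝ) = 1 + 2 * d * (t + 2) := by
      rw [hKs]; field_simp
    rw [h1]
    have : ‖F' - F‖ * (1 + 2 * d * (t + 2)) ≤ 1 := by
      rwa [le_div_iff₀ hden] at hFF
    linarith
  have hpt := mF_le_tiling hd hτadd hp hc₁ hVnn hlamnn hgrowth hK hs0 hsR F F' hMM
  have hiF' := integrable_mF hτmp hp hc₁ hVmeas hVcont hVnn hlamnn hint hgrowth F' k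
  have hibd := integrable_bd hint c₁ p (M + 1)
  have hi1 : ∀ j ∈ boxZ d N,
      Integrable (fun ω => mF τ E0 V (τ (corner s k j) ω) F' (cube d k)) P :=
    fun j _ => (hτmp _).integrable_comp_of_integrable hiF'
  have hi2 : ∀ z ∈ boxZ d K \ inner d s k N,
      Integrable (fun ω => bd E0 lam c₁ p (M + 1) (τ z ω)) P :=
    fun z _ => (hτmp z).integrable_comp_of_integrable hibd
  have hI : ∫ ω, mF τ E0 V ω F (cube d K) ∂P ≤
      (N : ℝ) ^ d * ∫ ω, mF τ E0 V ω F' (cube d k) ∂P + ((K : ℝ) ^ d - (t * s : ℝ) ^ d) * C := by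
    have h1 := integral_mono_of_nonneg (μ := P)
      (Eventually.of_forall fun ω => mF_nonneg (τ := τ) hVnn ω F K)
      ((integrable_finsetSum _ hi1).add (integrable_finsetSum _ hi2))
      (Eventually.of_forall hpt)
    refine h1.trans (le_of_eq ?_)
    simp only [Pi.add_apply]
    rw [integral_add (integrable_finsetSum _ hi1) (integrable_finsetSum _ hi2),
      integral_finsetSum _ hi1, integral_finsetSum _ hi2]
    have e1 : ∀ j ∈ boxZ d N, ∫ ω, mF τ E0 V (τ (corner s k j) ω) F' (cube d k) ∂P =
        ∫ ω, mF τ E0 V ω F' (cube d k) ∂P := fun j _ => integral_comp_mp (hτmp _) hiF'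
    have e2 : ∀ z ∈ boxZ d K \ inner d s k N,
        ∫ ω, bd E0 lam c₁ p (M + 1) (τ z ω) ∂P = C := fun z _ => integral_comp_mp (hτmp z) hibd
    rw [Finset.sum_congr rfl e1, Finset.sum_congr rfl e2, Finset.sum_const, Finset.sum_const,
      card_boxZ, nsmul_eq_mul, nsmul_eq_mul, Finset.card_sdiff_of_subset (inner_subset hK),
      card_inner, card_boxZ, Nat.cast_sub (Nat.pow_le_pow_left (by omega) d)]
    rw [Nat.cast_pow, Nat.cast_pow, Nat.cast_pow, hNk]
  have hW : W0 P τ E0 V F ≤ ((K : ℝ) ^ d)⁻¹ * ∫ ω, mF τ E0 V ω F (cube d K) ∂P :=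
    ciInf_le (f := fun k : {k : ℕ // 0 < k} =>
      (((k : ℕ) : ℝ) ^ d)⁻¹ * ∫ ω, mF τ E0 V ω F (cube d k) ∂P)
      ⟨0, by
        rintro _ ⟨k, rfl⟩
        exact mul_nonneg (by positivity) (integral_nonneg fun ω => mF_nonneg hVnn _ _ _)⟩ ⟨K, hK0⟩
  refine hW.trans ?_
  have hJ : 0 ≤ ∫ ω, mF τ E0 V ω F' (cube d k) ∂P := integral_nonneg fun ω => mF_nonneg hVnn _ _ _
  set J := ∫ ω, mF τ E0 V ω F' (cube d k) ∂P
  calc ((K : ℝ) ^ d)⁻¹ * ∫ ω, mF τ E0 V ω F (cube d K) ∂P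
      ≤ ((K : ℝ) ^ d)⁻¹ * ((N : ℝ) ^ d * J + ((K : ℝ) ^ d - (t * s : ℝ) ^ d) * C) := by gcongr
    _ = ((N : ℝ) / K) ^ d * J + (1 - ((t * s : ℝ) / K) ^ d) * C := by
        rw [div_pow, div_pow]; field_simp
    _ ≤ ((k : ℝ) ^ d)⁻¹ * J + ε := by
        refine add_le_add ?_ ?_
        · rw [← inv_pow]
          gcongr
          rw [div_le_iff₀ hK0', ← div_eq_inv_mul, le_div_iff₀ hk']
          have : N * k ≤ K := by omega
          exact_mod_cast this
        · have ht2 : (0 : ℝ) < t + 2 := by positivity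
          have h1 : (t * s : ℝ) / K = 1 + -(2 / (t + 2)) := by
            rw [hKs]; field_simp; ring
          have h2 : (2 : ℝ) / (t + 2) ≤ 1 := by
            rw [div_le_one ht2]; linarith [(Nat.cast_nonneg t : (0 : ℝ) ≤ t)]
          have h3 := one_add_mul_le_pow (a := -((2 : ℝ) / (t + 2))) (by linarith) d
          rw [h1]
          have h4 : (d : ℝ) * (2 / (t + 2)) * (C + 1) ≤ ε := by
            rw [div_le_iff₀ hε] at ht
            rw [mul_div_assoc', div_mul_eq_mul_div, div_le_iff₀ ht2]
            linarith
          have h5 : 0 ≤ (d : ℝ) * (2 / (t + 2)) := by positivity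
          nlinarith

/-- continuity of the homogenized energy density,
Proposition 3.9 of the paper. -/
theorem continuity_W0
    {d n : ℕ} (hd : 2 ≤ d) (hn : 1 ≤ n)
    {Ω : Type*} [MeasurableSpace Ω] (P : Measure Ω) [IsProbabilityMeasure P]
    (τ : Zd d → Ω → Ω) (hτ0 : τ 0 = id)
    (hτadd : ∀ x y : Zd d, τ (x + y) = τ x ∘ τ y)
    (hτmp : ∀ z : Zd d, MeasurePreserving (τ z) P P)
    (hτerg : ∀ B : Set Ω, MeasurableSet B → (∀ z : Zd d, τ z ⁻¹' B = B) → P B = 0 ∨ P B = 1)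
    (E0 : Finset (Zd d)) (hE00 : (0 : Zd d) ∉ E0) (hE0b : ∀ i : Fin d, stdb i ∈ E0)
    (p c₁ : ℝ) (hp : 1 < p) (hc₁ : 0 < c₁)
    (V : Zd d → Ω → Rn n → ℝ)
    (hVmeas : ∀ b ∈ E0, Measurable fun q : Ω × Rn n => V b q.1 q.2)
    (hVcont : ∀ b ∈ E0, ∀ ω : Ω, Continuous (V b ω))
    (hVnn : ∀ b ∈ E0, ∀ (ω : Ω) (r : Rn n), 0 ≤ V b ω r)
    (lam : Zd d → Ω → ℝ)
    (hlammeas : ∀ b ∈ E0, Measurable (lam b))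
    (hlamnn : ∀ b ∈ E0, ∀ ω : Ω, 0 ≤ lam b ω)
    (hgrowth : ∀ b ∈ E0, ∀ (ω : Ω) (r : Rn n),
      lam b ω * (‖r‖ ^ p / c₁ - c₁) ≤ V b ω r ∧ V b ω r ≤ c₁ * (1 + lam b ω * (‖r‖ ^ p + 1)))
    (α β : ℝ) (hα : 1 ≤ α) (hβ : 1 / (p - 1) ≤ β)
    (hmomα : ∀ b ∈ E0, ∫⁻ ω, ENNReal.ofReal (lam b ω ^ α) ∂P < ⊤)
    (hmomβ : ∀ i : Fin d, ∫⁻ ω, ENNReal.ofReal (lam (stdb i) ω) ^ (-β) ∂P < ⊤)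
    (h2T : (1 < α ∧ 1 / α + 1 / β ≤ p / (d : ℝ)) ∨
      (n = 1 ∧ ∃ q c₂ : ℝ, 1 < q ∧ q < p ∧ ∃ f : Zd d → Ω → Rn n → ℝ,
        ∀ b ∈ E0, ∀ ω : Ω,
          (∀ r : Rn n, 0 ≤ f b ω r) ∧
          ConvexOn ℝ Set.univ (fun r : Rn n => V b ω r + f b ω r) ∧
          (∀ r : Rn n, f b ω r ≤ c₂ * (1 + lam b ω * (‖r‖ ^ q + 1)))))
    : (∀ F : Rd d →L[ℝ] Rn n, 0 ≤ W0 P τ E0 V F) ∧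
      Continuous (fun F : Rd d →L[ℝ] Rn n => W0 P τ E0 V F) := by
  have hd0 : 0 < d := by omega
  have hint : ∀ b ∈ E0, Integrable (lam b) P := fun b hb =>
    integrable_lam (hlammeas b hb) (hlamnn b hb) hα (hmomα b hb)
  have hgr : ∀ b ∈ E0, ∀ (ω : Ω) (r : Rn n), V b ω r ≤ c₁ * (1 + lam b ω * (‖r‖ ^ p + 1)) :=
    fun b hb ω r => (hgrowth b hb ω r).2
  refine ⟨fun F => Real.iInf_nonneg fun k => mul_nonneg (by positivity)
    (integral_nonneg fun ω => mF_nonneg hVnn _ _ _), ?_⟩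
  rw [Metric.continuous_iff]
  intro F₀ ε hε
  obtain ⟨ρ, hρ, H⟩ := W0_compare hd0 hτadd hτmp hp hc₁ hVmeas hVcont hVnn hlamnn hint hgr
    (M := ‖F₀‖ + 1) (ε := ε / 2) (by positivity) (by positivity)
  refine ⟨min ρ 1, by positivity, fun F hF => ?_⟩
  rw [dist_eq_norm] at hF
  have h1 : ‖F - F₀‖ ≤ ρ := hF.le.trans (min_le_left _ _)
  have h2 : ‖F - F₀‖ ≤ 1 := hF.le.trans (min_le_right _ _)
  have h3 : ‖F‖ ≤ ‖F₀‖ + 1 := by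
    have := norm_le_norm_add_norm_sub' F F₀
    linarith
  have h4 := H F₀ F (by linarith) h1
  have h5 := H F F₀ h3 (by rwa [norm_sub_rev])
  rw [Real.dist_eq, abs_lt]
  constructor <;> linarith

end StochHom
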